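/- arXiv:0806.4538 — 2 statements merged into one kernel-verified Lean document; each statement's English description precedes it below -/
import Mathlib

section
/- (Key estimate for Lemma on Λ₁.) There exists a constant C > 0 such that for all finitely supported functions a₁, a₂, a₃, d : ℤ×ℤ → [0,∞), Σ d(q₁+q₂+q₃, k₁+k₂+k₃) a₁(q₁,k₁) a₂(q₂,k₂) a₃(q₃,k₃) — the sum taken over all (q₁,q₂,q₃) ∈ ℤ³ and all (k₁,k₂,k₃) ∈ ℤ³ with (k₁+k₂)(k₁+k₃) ≠ 0 — is at most C ‖⟨q+k²⟩^{7/16}⟨k⟩ d‖_{ℓ²(ℤ²)} · ‖⟨q−k²⟩^{7/16}⟨k⟩^{−1/48} a₁‖_{ℓ²(ℤ²)} · ‖⟨q+k²⟩^{7/16}⟨k⟩^{−1/48} a₂‖_{ℓ²(ℤ²)} · ‖⟨q+k²⟩^{7/16}⟨k⟩^{−1/48} a₃‖_{ℓ²(ℤ²)}. -/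
/-!
With `k = k₁ + k₂ + k₃` and `q = q₁ + q₂ + q₃`, the modulations satisfy
`(q + k²) - (q₁ - k₁²) - (q₂ + k₂²) - (q₃ + k₃²) = 2 (k₁ + k₂) (k₁ + k₃)`.
Off the resonant set the product `P` of their four brackets therefore dominates `⟨m⟩⟨n⟩`, where
`m = k₁ + k₂` and `n = k₁ + k₃` (`jap_mul_jap_le_modulation`). Since `k₃ = k - m`, `k₂ = k - n` and
`k₁ = m + n - k`, one has `⟨k₁⟩⟨k₂⟩⟨k₃⟩ ≲ ⟨k⟩³ (⟨m⟩⟨n⟩)² ≲ ⟨k⟩³ P²`; taking the power `1/48` shows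
that a factor `1/24` of each modulation weight, together with the weight `⟨k⟩` on `d`, pays for the
three weights `⟨kᵢ⟩^{-1/48}` (`term_le`).

Each factor keeps the modulation exponent `7/16 - 1/24 = 19/48`, which exceeds the exponent `3/8` of
Bourgain's periodic `L⁴` Strichartz estimate, so what remains is the unrestricted quadrilinear
`L⁴` bound. Reflecting `a₁` through the origin, the form is the `ℓ²` pairing of the convolution of
the second and third inputs with that of `d` and the reflected first input (`tsum_quad_sq_le`).
By Cauchy–Schwarz each convolution is bounded in `ℓ²` (`tsum_conv_sq_le`) once
`∑_{q₁,k₁} ⟨q₁ + k₁²⟩^{-19/24} ⟨q - q₁ + (k - k₁)²⟩^{-19/24}` is bounded uniformly in `(q, k)`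
(`tsum_kernel_le`). Summing in `q₁` leaves `∑_{k₁} ⟨q + k₁² + (k - k₁)²⟩^{-13/24}`, and the quadratic
polynomial in `k₁` is at least comparable to the squared distance of `2k₁ - k` to a root, so the sum
is controlled by `∑ ⟨n⟩^{-13/12} < ∞` (`tsum_quadratic_le`).

Sums are handled in `ℝ≥0∞`, where no summability conditions are needed.
-/

noncomputable section

open Real

/-- The Japanese bracket `⟨m⟩ = (1+m²)^{1/2}`. -/
def jap (m : ℤ) : ℝ := Real.sqrt (1 + (m : ℝ) ^ 2)

/-- The weighted `ℓ²(ℤ²)` norm `‖⟨q+k²⟩^b ⟨k⟩^s a‖_{ℓ²}`. -/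
def wplus (b s : ℝ) (a : ℤ × ℤ → ℝ) : ℝ :=
  (∑' p : ℤ × ℤ, (jap (p.1 + p.2 ^ 2) ^ b * jap p.2 ^ s * a p) ^ 2) ^ ((1:ℝ)/2)

/-- The weighted `ℓ²(ℤ²)` norm `‖⟨q−k²⟩^b ⟨k⟩^s a‖_{ℓ²}` (the conjugate weight). -/
def wminus (b s : ℝ) (a : ℤ × ℤ → ℝ) : ℝ :=
  (∑' p : ℤ × ℤ, (jap (p.1 - p.2 ^ 2) ^ b * jap p.2 ^ s * a p) ^ 2) ^ ((1:ℝ)/2)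

/-! ### The Japanese bracket -/

lemma jap_sq (m : ℤ) : jap m ^ 2 = 1 + (m : ℝ) ^ 2 := Real.sq_sqrt (by positivity)

lemma one_le_jap (m : ℤ) : 1 ≤ jap m := Real.one_le_sqrt.2 (by nlinarith [sq_nonneg (m : ℝ)])

lemma jap_pos (m : ℤ) : 0 < jap m := lt_of_lt_of_le one_pos (one_le_jap m)

lemma abs_le_jap (m : ℤ) : |(m : ℝ)| ≤ jap m :=
  abs_le_of_sq_le_sq (by rw [jap_sq]; linarith) (jap_pos m).le

lemma jap_neg (m : ℤ) : jap (-m) = jap m := by simp [jap]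

lemma jap_add_le (x y : ℤ) : jap (x + y) ≤ jap x + jap y := by
  refine le_of_sq_le_sq ?_ (by linarith [jap_pos x, jap_pos y])
  have h : (x : ℝ) * y ≤ jap x * jap y :=
    (le_abs_self _).trans (by
      rw [abs_mul]
      exact mul_le_mul (abs_le_jap x) (abs_le_jap y) (abs_nonneg _) (jap_pos x).le)
  have := jap_sq x
  have := jap_sq y
  have := jap_sq (x + y)
  push_cast at this
  nlinarith

lemma jap_add_le_mul (x y : ℤ) : jap (x + y) ≤ 2 * jap x * jap y := by
  nlinarith [jap_add_le x y, one_le_jap x, one_le_jap y]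

lemma jap_sub_le_mul (x y : ℤ) : jap (x - y) ≤ 2 * jap x * jap y := by
  simpa [sub_eq_add_neg, jap_neg] using jap_add_le_mul x (-y)

lemma jap_le_two_mul_abs {m : ℤ} (hm : m ≠ 0) : jap m ≤ 2 * |(m : ℝ)| := by
  have h1 : (1 : ℝ) ≤ |(m : ℝ)| := by exact_mod_cast Int.one_le_abs hm
  refine le_of_sq_le_sq ?_ (by positivity)
  rw [jap_sq, mul_pow, sq_abs]
  nlinarith [sq_abs (m : ℝ)]

lemma jap_rpow_neg_le {r : ℝ} (hr : r ≤ 0) {m n : ℤ} {c : ℝ} (hc : 0 < c)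
    (h : jap m ≤ c * jap n) : jap n ^ r ≤ c ^ (-r) * jap m ^ r := by
  have h1 : (c * jap n) ^ r ≤ jap m ^ r := rpow_le_rpow_of_nonpos (jap_pos m) h hr
  rw [mul_rpow hc.le (jap_pos n).le] at h1
  calc jap n ^ r = c ^ (-r) * (c ^ r * jap n ^ r) := by
        rw [← mul_assoc, ← rpow_add hc]; simp
    _ ≤ _ := by gcongr

/-! ### The modulation gain off the resonant set -/

/-- The modulation identity: the four modulations combine to `2 (k₁ + k₂) (k₁ + k₃)`, so their
product dominates `⟨k₁ + k₂⟩ ⟨k₁ + k₃⟩` off the resonant set. -/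
lemma jap_mul_jap_le_modulation {q₁ q₂ q₃ k₁ k₂ k₃ : ℤ} (h : (k₁ + k₂) * (k₁ + k₃) ≠ 0) :
    jap (k₁ + k₂) * jap (k₁ + k₃) ≤
      8 * (jap (q₁ + q₂ + q₃ + (k₁ + k₂ + k₃) ^ 2) * jap (q₁ - k₁ ^ 2) *
        jap (q₂ + k₂ ^ 2) * jap (q₃ + k₃ ^ 2)) := by
  obtain ⟨hm, hn⟩ := mul_ne_zero_iff.1 h
  set A := q₁ + q₂ + q₃ + (k₁ + k₂ + k₃) ^ 2 with hA
  set B := q₁ - k₁ ^ 2 with hB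
  set C := q₂ + k₂ ^ 2 with hC
  set D := q₃ + k₃ ^ 2 with hD
  have key : 2 * ((k₁ + k₂) * (k₁ + k₃)) = A - B - (C + D) := by
    rw [hA, hB, hC, hD]; ring
  have h1 : jap (k₁ + k₂) * jap (k₁ + k₃) ≤
      (2 * |((k₁ + k₂ : ℤ) : ℝ)|) * (2 * |((k₁ + k₃ : ℤ) : ℝ)|) :=
    mul_le_mul (jap_le_two_mul_abs hm) (jap_le_two_mul_abs hn) (jap_pos _).le (by positivity)
  have h2 : (2 * |((k₁ + k₂ : ℤ) : ℝ)|) * (2 * |((k₁ + k₃ : ℤ) : ℝ)|) =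
      2 * |((A - B - (C + D) : ℤ) : ℝ)| := by
    rw [← key]; push_cast; rw [abs_mul, abs_mul]; norm_num; ring
  have h3 := abs_le_jap (A - B - (C + D))
  have h4 : jap (A - B - (C + D)) ≤ jap A + jap B + jap C + jap D := by
    have e1 := jap_add_le (A + -B) (-(C + D))
    have e2 := jap_add_le A (-B)
    have e3 := jap_add_le C D
    rw [jap_neg] at e1 e2
    have : A - B - (C + D) = A + -B + -(C + D) := by ring
    rw [this]; linarith
  have a := one_le_jap A
  have b := one_le_jap B
  have c := one_le_jap C
  have d := one_le_jap D
  have hab : jap A + jap B ≤ 2 * (jap A * jap B) := by nlinarith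
  have hcd : jap C + jap D ≤ 2 * (jap C * jap D) := by nlinarith
  have hab1 : 1 ≤ jap A * jap B := by nlinarith
  have hcd1 : 1 ≤ jap C * jap D := by nlinarith
  have : jap A * jap B + jap C * jap D ≤ 2 * ((jap A * jap B) * (jap C * jap D)) := by nlinarith
  have e : jap A * jap B * jap C * jap D = (jap A * jap B) * (jap C * jap D) := by ring
  rw [e]; linarith

/-- Off the resonant set, a `1/24` power of every modulation pays for the negative regularity
`-1/48` of the three inputs; the output weight `⟨k⟩` absorbs the rest. -/
lemma weight_le {q₁ q₂ q₃ k₁ k₂ k₃ : ℤ} (h : (k₁ + k₂) * (k₁ + k₃) ≠ 0) :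
    (jap k₁ * jap k₂ * jap k₃) ^ ((1 : ℝ) / 48) ≤
      1024 * jap (k₁ + k₂ + k₃) *
      (jap (q₁ + q₂ + q₃ + (k₁ + k₂ + k₃) ^ 2) * jap (q₁ - k₁ ^ 2) *
        jap (q₂ + k₂ ^ 2) * jap (q₃ + k₃ ^ 2)) ^ ((1 : ℝ) / 24) := by
  have hmod := jap_mul_jap_le_modulation (q₁ := q₁) (q₂ := q₂) (q₃ := q₃) h
  set P := jap (q₁ + q₂ + q₃ + (k₁ + k₂ + k₃) ^ 2) * jap (q₁ - k₁ ^ 2) *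
        jap (q₂ + k₂ ^ 2) * jap (q₃ + k₃ ^ 2) with hP
  have hP0 : 0 < P := by
    have := jap_pos (q₁ + q₂ + q₃ + (k₁ + k₂ + k₃) ^ 2)
    have := jap_pos (q₁ - k₁ ^ 2)
    have := jap_pos (q₂ + k₂ ^ 2)
    have := jap_pos (q₃ + k₃ ^ 2)
    positivity
  set k := k₁ + k₂ + k₃ with hk
  set m := k₁ + k₂ with hm
  set n := k₁ + k₃ with hn
  have hk0 := jap_pos k
  have hm0 := jap_pos m
  have hn0 := jap_pos n
  have e3 : jap k₃ ≤ 2 * jap k * jap m := by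
    have := jap_sub_le_mul k m
    rwa [show k - m = k₃ by rw [hk, hm]; ring] at this
  have e2 : jap k₂ ≤ 2 * jap k * jap n := by
    have := jap_sub_le_mul k n
    rwa [show k - n = k₂ by rw [hk, hn]; ring] at this
  have e1 : jap k₁ ≤ 4 * jap k * jap m * jap n := by
    have h1 := jap_sub_le_mul (m + n) k
    rw [show m + n - k = k₁ by rw [hk, hm, hn]; ring] at h1
    have h2 := jap_add_le_mul m n
    nlinarith
  have hprod : jap k₁ * jap k₂ * jap k₃ ≤ 1024 * jap k ^ 3 * P ^ 2 := by
    calc jap k₁ * jap k₂ * jap k₃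
        ≤ (4 * jap k * jap m * jap n) * (2 * jap k * jap n) * (2 * jap k * jap m) := by
          have := jap_pos k₁
          have := jap_pos k₂
          have := jap_pos k₃
          gcongr
      _ = 16 * jap k ^ 3 * (jap m * jap n) ^ 2 := by ring
      _ ≤ 16 * jap k ^ 3 * (8 * P) ^ 2 := by gcongr
      _ = 1024 * jap k ^ 3 * P ^ 2 := by ring
  calc (jap k₁ * jap k₂ * jap k₃) ^ ((1 : ℝ) / 48)
      ≤ (1024 * jap k ^ 3 * P ^ 2) ^ ((1 : ℝ) / 48) := by
        have := jap_pos k₁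
        have := jap_pos k₂
        have := jap_pos k₃
        gcongr
    _ = 1024 ^ ((1 : ℝ) / 48) * jap k ^ ((1 : ℝ) / 16) * P ^ ((1 : ℝ) / 24) := by
        rw [mul_rpow (by positivity) (by positivity), mul_rpow (by positivity) (by positivity),
          ← rpow_natCast (jap k), ← rpow_natCast P, ← rpow_mul hk0.le, ← rpow_mul hP0.le]
        norm_num
    _ ≤ 1024 * jap k * P ^ ((1 : ℝ) / 24) := by
        gcongr
        · exact rpow_le_self_of_one_le (by norm_num) (by norm_num)
        · exact rpow_le_self_of_one_le (one_le_jap k) (by norm_num)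

/-- Pointwise bound turning the non-resonant sum into an unrestricted one with modulation
weights `1/24`. -/
lemma term_le {q₁ q₂ q₃ k₁ k₂ k₃ : ℤ} (h : (k₁ + k₂) * (k₁ + k₃) ≠ 0)
    {d a b c : ℝ} (hd : 0 ≤ d) (ha : 0 ≤ a) (hb : 0 ≤ b) (hc : 0 ≤ c) :
    d * a * b * c ≤ 1024 *
      ((jap (q₁ + q₂ + q₃ + (k₁ + k₂ + k₃) ^ 2) ^ ((1 : ℝ) / 24) *
          jap (k₁ + k₂ + k₃) ^ (1 : ℝ) * d) *
        (jap (q₁ - k₁ ^ 2) ^ ((1 : ℝ) / 24) * jap k₁ ^ (-((1 : ℝ) / 48)) * a) *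
        (jap (q₂ + k₂ ^ 2) ^ ((1 : ℝ) / 24) * jap k₂ ^ (-((1 : ℝ) / 48)) * b) *
        (jap (q₃ + k₃ ^ 2) ^ ((1 : ℝ) / 24) * jap k₃ ^ (-((1 : ℝ) / 48)) * c)) := by
  have hw := weight_le (q₁ := q₁) (q₂ := q₂) (q₃ := q₃) h
  have p1 := jap_pos k₁
  have p2 := jap_pos k₂
  have p3 := jap_pos k₃
  have s0 := jap_pos (q₁ + q₂ + q₃ + (k₁ + k₂ + k₃) ^ 2)
  have s1 := jap_pos (q₁ - k₁ ^ 2)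
  have s2 := jap_pos (q₂ + k₂ ^ 2)
  have s3 := jap_pos (q₃ + k₃ ^ 2)
  rw [mul_rpow (by positivity) p3.le, mul_rpow p1.le p2.le, mul_rpow (by positivity) s3.le,
    mul_rpow (by positivity) s2.le, mul_rpow s0.le s1.le] at hw
  rw [rpow_one, rpow_neg p1.le, rpow_neg p2.le, rpow_neg p3.le]
  have u1 := rpow_pos_of_pos p1 ((1 : ℝ) / 48)
  have u2 := rpow_pos_of_pos p2 ((1 : ℝ) / 48)
  have u3 := rpow_pos_of_pos p3 ((1 : ℝ) / 48)
  generalize jap k₁ ^ ((1 : ℝ) / 48) = x1 at *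
  generalize jap k₂ ^ ((1 : ℝ) / 48) = x2 at *
  generalize jap k₃ ^ ((1 : ℝ) / 48) = x3 at *
  have hD : 0 ≤ d * a * b * c := by positivity
  calc d * a * b * c = (x1 * x2 * x3) * (d * a * b * c) * (x1⁻¹ * x2⁻¹ * x3⁻¹) := by
        field_simp
    _ ≤ _ := mul_le_mul_of_nonneg_right (mul_le_mul_of_nonneg_right hw hD) (by positivity)
    _ = _ := by ring

/-! ### Weighted convolution estimates in `ℓ²` -/

open scoped ENNReal

lemma tsum_mul_sq_le {ι : Type*} (f g : ι → ℝ≥0∞) :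
    (∑' i, f i * g i) ^ 2 ≤ (∑' i, f i ^ 2) * ∑' i, g i ^ 2 := by
  let _ : MeasurableSpace ι := ⊤
  have h := ENNReal.lintegral_mul_le_Lp_mul_Lq (MeasureTheory.Measure.count : MeasureTheory.Measure ι)
    (p := 2) (q := 2) ⟨by norm_num, by norm_num, by norm_num⟩ (f := f) (g := g)
    (measurable_from_top.aemeasurable) (measurable_from_top.aemeasurable)
  simp only [MeasureTheory.lintegral_count, Pi.mul_apply, ENNReal.rpow_two] at h
  calc _ ≤ _ := pow_le_pow_left₀ zero_le h 2
    _ = _ := by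
      rw [mul_pow, ← ENNReal.rpow_natCast, ← ENNReal.rpow_natCast, ← ENNReal.rpow_mul,
        ← ENNReal.rpow_mul]
      norm_num

/-- Weighted Young-type inequality on `ℓ²`: if the kernel `s²` has bounded self-convolution and
`s v = 1`, then convolution maps `ℓ²(v²) × ℓ²(v²)` to `ℓ²`. -/
lemma tsum_conv_sq_le {G : Type*} [AddCommGroup G] {s v : G → ℝ≥0∞} (hsv : ∀ p, s p * v p = 1)
    {K : ℝ≥0∞} (hK : ∀ Q, ∑' p, (s p * s (Q - p)) ^ 2 ≤ K) (F H : G → ℝ≥0∞) :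
    ∑' Q, (∑' p, F p * H (Q - p)) ^ 2 ≤
      K * ((∑' p, (v p * F p) ^ 2) * ∑' p, (v p * H p) ^ 2) := by
  have h1 : ∀ Q, (∑' p, F p * H (Q - p)) ^ 2 ≤
      K * ∑' p, (v p * F p) ^ 2 * (v (Q - p) * H (Q - p)) ^ 2 := by
    intro Q
    calc (∑' p, F p * H (Q - p)) ^ 2
        = (∑' p, (s p * s (Q - p)) * ((v p * F p) * (v (Q - p) * H (Q - p)))) ^ 2 := by
          congr 2; ext p
          calc F p * H (Q - p) = (s p * v p) * (s (Q - p) * v (Q - p)) * (F p * H (Q - p)) := by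
                rw [hsv, hsv]; simp
            _ = _ := by ring
      _ ≤ _ := tsum_mul_sq_le _ _
      _ ≤ _ := by
          refine (mul_le_mul_left (hK Q) _).trans_eq ?_
          simp only [mul_pow]
  refine (ENNReal.tsum_le_tsum h1).trans_eq ?_
  rw [ENNReal.tsum_mul_left, ENNReal.tsum_comm]
  congr 1
  simp only [ENNReal.tsum_mul_left]
  rw [← ENNReal.tsum_mul_right]
  congr 1; ext p; congr 1
  exact (Equiv.subRight p).tsum_eq (fun x => (v x * H x) ^ 2)

/-- The quadrilinear form pairs the convolution of the second and third inputs with that of the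
output and the reflected first input. -/
lemma tsum_quad_sq_le {G : Type*} [AddCommGroup G] {s v : G → ℝ≥0∞} (hsv : ∀ p, s p * v p = 1)
    {K : ℝ≥0∞} (hK : ∀ Q, ∑' p, (s p * s (Q - p)) ^ 2 ≤ K) (D A₁ A₂ A₃ : G → ℝ≥0∞) :
    (∑' m : G × G × G, D (m.1 + m.2.1 + m.2.2) * A₁ m.1 * A₂ m.2.1 * A₃ m.2.2) ^ 2 ≤
      K ^ 2 * ((∑' p, (v p * D p) ^ 2) * (∑' p, (v (-p) * A₁ p) ^ 2) *
        (∑' p, (v p * A₂ p) ^ 2) * (∑' p, (v p * A₃ p) ^ 2)) := by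
  have h0 : ∑' m : G × G × G, D (m.1 + m.2.1 + m.2.2) * A₁ m.1 * A₂ m.2.1 * A₃ m.2.2 =
      ∑' Q, (∑' p, A₂ p * A₃ (Q - p)) * ∑' p, A₁ (-p) * D (Q - p) := by
    rw [ENNReal.tsum_prod', ENNReal.tsum_comm, ENNReal.tsum_prod']
    -- Substitute `p₃ = Q - p₂` in the middle sum and `p₁ = -p` in the inner one.
    have e : ∀ p₂ : G, ∑' p₃ : G, ∑' p₁ : G, D (p₁ + p₂ + p₃) * A₁ p₁ * A₂ p₂ * A₃ p₃ =
        ∑' Q : G, A₂ p₂ * A₃ (Q - p₂) * ∑' p, A₁ (-p) * D (Q - p) := by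
      intro p₂
      rw [← (Equiv.subRight p₂).tsum_eq]
      congr 1; ext Q
      rw [← ENNReal.tsum_mul_left, ← (Equiv.neg G).tsum_eq]
      congr 1; ext p
      simp only [Equiv.subRight_apply, Equiv.neg_apply]
      rw [show -p + p₂ + (Q - p₂) = Q - p by abel]
      ring
    simp only [e]
    rw [ENNReal.tsum_comm]
    simp only [ENNReal.tsum_mul_right]
  have h1 : ∑' p, (v (-p) * A₁ p) ^ 2 = ∑' p, (v p * A₁ (-p)) ^ 2 := by
    rw [← (Equiv.neg G).tsum_eq]; simp
  rw [h0, h1]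
  refine (tsum_mul_sq_le _ _).trans ?_
  refine (mul_le_mul' (tsum_conv_sq_le hsv hK A₂ A₃)
    (tsum_conv_sq_le hsv hK (fun p => A₁ (-p)) D)).trans_eq ?_
  ring

/-! ### The counting estimate -/

/-- The larger of the two brackets dominates `⟨x + y⟩ / 2`, and gives up a power `13/24 > 1/2` of
itself; what is left is summable because `2 · 19/24 - 13/24 = 25/24 > 1`. -/
lemma jap_conv_le (x y : ℤ) :
    jap x ^ (-(19 / 24 : ℝ)) * jap y ^ (-(19 / 24 : ℝ)) ≤
      2 * jap (x + y) ^ (-(13 / 24 : ℝ)) *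
        (jap x ^ (-(25 / 24 : ℝ)) + jap y ^ (-(25 / 24 : ℝ))) := by
  wlog hxy : jap x ≤ jap y generalizing x y
  · have := this y x (le_of_not_ge hxy)
    rw [add_comm y x] at this
    linarith
  have px := jap_pos x
  have py := jap_pos y
  have h1 : jap (x + y) ≤ 2 * jap y := by linarith [jap_add_le x y]
  have h2 := jap_rpow_neg_le (r := -(13 / 24 : ℝ)) (by norm_num) two_pos h1
  have h3 : (2 : ℝ) ^ (-(-(13 / 24 : ℝ))) ≤ 2 :=
    rpow_le_self_of_one_le (by norm_num) (by norm_num)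
  have h4 : jap y ^ (-(1 / 4 : ℝ)) ≤ jap x ^ (-(1 / 4 : ℝ)) :=
    rpow_le_rpow_of_nonpos px hxy (by norm_num)
  have z := rpow_pos_of_pos (jap_pos (x + y)) (-(13 / 24 : ℝ))
  calc jap x ^ (-(19 / 24 : ℝ)) * jap y ^ (-(19 / 24 : ℝ))
      = jap x ^ (-(19 / 24 : ℝ)) * (jap y ^ (-(1 / 4 : ℝ)) * jap y ^ (-(13 / 24 : ℝ))) := by
        rw [← rpow_add py]; norm_num
    _ ≤ jap x ^ (-(19 / 24 : ℝ)) *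
          (jap x ^ (-(1 / 4 : ℝ)) * (2 * jap (x + y) ^ (-(13 / 24 : ℝ)))) := by
        gcongr
        exact h2.trans (by gcongr)
    _ = 2 * jap (x + y) ^ (-(13 / 24 : ℝ)) * jap x ^ (-(25 / 24 : ℝ)) := by
        rw [← mul_assoc, ← rpow_add px]; norm_num; ring
    _ ≤ _ := by
        gcongr
        linarith [rpow_pos_of_pos py (-(25 / 24 : ℝ))]

lemma tsum_jap_rpow_lt_top {r : ℝ} (hr : r < -1) :
    ∑' n : ℤ, ENNReal.ofReal (jap n ^ r) < ∞ := by
  have hs : Summable fun n : ℤ => jap n ^ r := by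
    have h := Real.summable_abs_int_rpow (b := -r) (by linarith)
    rw [neg_neg] at h
    refine Summable.of_norm_bounded_eventually h ?_
    have : ({0}ᶜ : Set ℤ) ∈ Filter.cofinite := (Set.finite_singleton 0).compl_mem_cofinite
    filter_upwards [this] with n hn
    rw [Real.norm_of_nonneg (rpow_nonneg (jap_pos n).le _)]
    exact rpow_le_rpow_of_nonpos (by simpa using hn) (abs_le_jap n) (by linarith)
  exact hs.tsum_ofReal_lt_top

/-- Every `w` with `2w = j² + c` dominates the squared distance of `j` to one of the two
integer-rounded real roots `±M` of `j² + c` (with `M = 0` if there are none). -/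
lemma exists_root (c : ℤ) : ∃ M : ℤ, ∀ j w : ℤ, 2 * w = j ^ 2 + c →
    jap (j - M) ^ 2 ≤ 7 * jap w ∨ jap (j + M) ^ 2 ≤ 7 * jap w := by
  have main : ∀ (y t : ℝ), 0 ≤ t → t ≤ 1 → ∀ (w z : ℤ), |(z : ℝ)| ≤ |y + t| →
      y ^ 2 ≤ 2 * |(w : ℝ)| → jap z ^ 2 ≤ 7 * jap w := by
    intro y t ht ht1 w z hz hy
    rw [jap_sq]
    have h1 : (z : ℝ) ^ 2 ≤ (y + t) ^ 2 := sq_le_sq.2 hz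
    have := abs_le_jap w
    have := one_le_jap w
    nlinarith [sq_nonneg (y - t)]
  rcases le_or_gt 0 c with hc | hc
  · refine ⟨0, fun j w hw => Or.inl (main j 0 le_rfl zero_le_one w _ (by simp) ?_)⟩
    have hw' : 2 * (w : ℝ) = (j : ℝ) ^ 2 + c := by exact_mod_cast hw
    have hc' : (0 : ℝ) ≤ c := by exact_mod_cast hc
    linarith [le_abs_self (w : ℝ)]
  · have hc' : (0 : ℝ) ≤ -(c : ℝ) := by
      have : (c : ℝ) < 0 := by exact_mod_cast hc
      linarith
    set N : ℝ := √(-(c : ℝ)) with hN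
    have hN0 : 0 ≤ N := Real.sqrt_nonneg _
    have hN2 : N ^ 2 = -(c : ℝ) := Real.sq_sqrt hc'
    have t0 : 0 ≤ N - (⌊N⌋ : ℝ) := by linarith [Int.floor_le N]
    have t1 : N - (⌊N⌋ : ℝ) ≤ 1 := by linarith [Int.lt_floor_add_one N]
    refine ⟨⌊N⌋, fun j w hw => ?_⟩
    have hw' : 2 * (w : ℝ) = (j : ℝ) ^ 2 + c := by exact_mod_cast hw
    have hroot : ∀ x : ℝ, 0 ≤ x → x ^ 2 = (j : ℝ) ^ 2 → (x - N) ^ 2 ≤ 2 * |(w : ℝ)| := by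
      intro x hx hxj
      rcases le_total N x with h | h
      · nlinarith [le_abs_self (w : ℝ)]
      · nlinarith [neg_abs_le (w : ℝ)]
    rcases le_total 0 (j : ℝ) with hj | hj
    · refine Or.inl (main (j - N) _ t0 t1 w _ (le_of_eq ?_) (hroot _ hj rfl))
      push_cast; congr 1; ring
    · refine Or.inr (main (-j - N) _ t0 t1 w _ (le_of_eq ?_) (hroot _ (by linarith) (by ring)))
      rw [← abs_neg]; push_cast; congr 1; ring

/-- Uniform bound for the sum over a quadratic progression. -/
lemma tsum_quadratic_le : ∃ K : ℝ≥0∞, K < ∞ ∧ ∀ Q k : ℤ,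
    ∑' l : ℤ, ENNReal.ofReal (jap (Q + l ^ 2 + (k - l) ^ 2) ^ (-(13 / 24 : ℝ))) ≤ K := by
  set T := ∑' n : ℤ, ENNReal.ofReal (jap n ^ (-(13 / 12 : ℝ))) with hT
  have hT' : T < ∞ := tsum_jap_rpow_lt_top (by norm_num)
  refine ⟨ENNReal.ofReal 7 * (T + T),
    ENNReal.mul_lt_top ENNReal.ofReal_lt_top (ENNReal.add_lt_top.2 ⟨hT', hT'⟩), fun Q k => ?_⟩
  obtain ⟨M, hM⟩ := exists_root (k ^ 2 + 2 * Q)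
  have hb : ∀ w z : ℤ, jap z ^ 2 ≤ 7 * jap w →
      jap w ^ (-(13 / 24 : ℝ)) ≤ 7 * jap z ^ (-(13 / 12 : ℝ)) := by
    intro w z h
    have hz := jap_pos z
    have hw := jap_pos w
    have h1 : (7 * jap w) ^ (-(13 / 24 : ℝ)) ≤ (jap z ^ 2) ^ (-(13 / 24 : ℝ)) :=
      rpow_le_rpow_of_nonpos (by positivity) h (by norm_num)
    rw [mul_rpow (by norm_num) (jap_pos w).le, ← rpow_natCast (jap z), ← rpow_mul hz.le] at h1
    have h2 : (7 : ℝ) ^ (13 / 24 : ℝ) ≤ 7 := rpow_le_self_of_one_le (by norm_num) (by norm_num)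
    calc jap w ^ (-(13 / 24 : ℝ))
        = 7 ^ (13 / 24 : ℝ) * (7 ^ (-(13 / 24 : ℝ)) * jap w ^ (-(13 / 24 : ℝ))) := by
          rw [← mul_assoc, ← rpow_add (by norm_num)]; simp
      _ ≤ 7 * jap z ^ (((2 : ℕ) : ℝ) * -(13 / 24 : ℝ)) := by gcongr
      _ = _ := by norm_num
  have hpt : ∀ l : ℤ, ENNReal.ofReal (jap (Q + l ^ 2 + (k - l) ^ 2) ^ (-(13 / 24 : ℝ))) ≤
      ENNReal.ofReal 7 * (ENNReal.ofReal (jap (2 * l - k - M) ^ (-(13 / 12 : ℝ))) +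
        ENNReal.ofReal (jap (2 * l - k + M) ^ (-(13 / 12 : ℝ)))) := by
    intro l
    rw [mul_add, ← ENNReal.ofReal_mul (by norm_num), ← ENNReal.ofReal_mul (by norm_num)]
    rcases hM (2 * l - k) (Q + l ^ 2 + (k - l) ^ 2) (by ring) with h | h
    · exact (ENNReal.ofReal_le_ofReal (hb _ _ h)).trans le_self_add
    · exact (ENNReal.ofReal_le_ofReal (hb _ _ h)).trans le_add_self
  refine (ENNReal.tsum_le_tsum hpt).trans ?_
  rw [ENNReal.tsum_mul_left, ENNReal.tsum_add]
  gcongr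
  · exact ENNReal.tsum_comp_le_tsum_of_injective (f := fun l : ℤ => 2 * l - k - M)
      (fun a b h => by simp only at h; omega) (fun n => ENNReal.ofReal (jap n ^ (-(13 / 12 : ℝ))))
  · exact ENNReal.tsum_comp_le_tsum_of_injective (f := fun l : ℤ => 2 * l - k + M)
      (fun a b h => by simp only at h; omega) (fun n => ENNReal.ofReal (jap n ^ (-(13 / 12 : ℝ))))

/-- The weight kernel `⟨q + k²⟩^{-19/24}` has bounded self-convolution; this is the counting
estimate behind the periodic `L⁴` Strichartz inequality with modulation exponent `19/48 > 3/8`. -/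
lemma tsum_kernel_le : ∃ K : ℝ≥0∞, K < ∞ ∧ ∀ Q : ℤ × ℤ,
    ∑' p : ℤ × ℤ, (ENNReal.ofReal (jap (p.1 + p.2 ^ 2) ^ (-(19 / 48 : ℝ))) *
      ENNReal.ofReal (jap ((Q - p).1 + (Q - p).2 ^ 2) ^ (-(19 / 48 : ℝ)))) ^ 2 ≤ K := by
  obtain ⟨K, hK, hQ⟩ := tsum_quadratic_le
  set g : ℤ → ℝ≥0∞ := fun n => ENNReal.ofReal (jap n ^ (-(25 / 24 : ℝ))) with hg
  have hS : ∑' n, g n < ∞ := tsum_jap_rpow_lt_top (by norm_num)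
  refine ⟨ENNReal.ofReal 2 * K * (∑' n, g n + ∑' n, g n),
    ENNReal.mul_lt_top (ENNReal.mul_lt_top ENNReal.ofReal_lt_top hK)
      (ENNReal.add_lt_top.2 ⟨hS, hS⟩), fun ⟨Q, R⟩ => ?_⟩
  have hpt : ∀ q k : ℤ, (ENNReal.ofReal (jap (q + k ^ 2) ^ (-(19 / 48 : ℝ))) *
      ENNReal.ofReal (jap (Q - q + (R - k) ^ 2) ^ (-(19 / 48 : ℝ)))) ^ 2 ≤
      ENNReal.ofReal 2 * ENNReal.ofReal (jap (Q + k ^ 2 + (R - k) ^ 2) ^ (-(13 / 24 : ℝ))) *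
        (g (q + k ^ 2) + g (Q - q + (R - k) ^ 2)) := by
    intro q k
    have h := jap_conv_le (q + k ^ 2) (Q - q + (R - k) ^ 2)
    rw [show q + k ^ 2 + (Q - q + (R - k) ^ 2) = Q + k ^ 2 + (R - k) ^ 2 by ring] at h
    have hx := jap_pos (q + k ^ 2)
    have hy := jap_pos (Q - q + (R - k) ^ 2)
    have hz := jap_pos (Q + k ^ 2 + (R - k) ^ 2)
    simp only [hg]
    rw [← ENNReal.ofReal_mul (by positivity), ← ENNReal.ofReal_pow (by positivity),
      ← ENNReal.ofReal_mul (by positivity), ← ENNReal.ofReal_add (by positivity) (by positivity),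
      ← ENNReal.ofReal_mul (by positivity)]
    refine ENNReal.ofReal_le_ofReal (le_of_eq_of_le ?_ h)
    rw [mul_pow, ← rpow_natCast, ← rpow_natCast, ← rpow_mul hx.le, ← rpow_mul hy.le]
    norm_num
  rw [ENNReal.tsum_prod', ENNReal.tsum_comm]
  calc _ ≤ ∑' k : ℤ, ∑' q : ℤ, ENNReal.ofReal 2 *
          ENNReal.ofReal (jap (Q + k ^ 2 + (R - k) ^ 2) ^ (-(13 / 24 : ℝ))) *
            (g (q + k ^ 2) + g (Q - q + (R - k) ^ 2)) :=
        ENNReal.tsum_le_tsum fun k => ENNReal.tsum_le_tsum fun q => hpt q k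
    _ = ∑' k : ℤ, ENNReal.ofReal 2 *
          ENNReal.ofReal (jap (Q + k ^ 2 + (R - k) ^ 2) ^ (-(13 / 24 : ℝ))) *
            (∑' n, g n + ∑' n, g n) := by
        congr 1; ext k
        rw [ENNReal.tsum_mul_left, ENNReal.tsum_add]
        congr 2
        · exact (Equiv.addRight (k ^ 2)).tsum_eq g
        · exact ((Equiv.subLeft Q).trans (Equiv.addRight ((R - k) ^ 2))).tsum_eq g
    _ ≤ _ := by
        rw [ENNReal.tsum_mul_right, ENNReal.tsum_mul_left]
        gcongr
        exact hQ Q R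

/-! ### The quadrilinear estimate -/

/-- Finiteness of the support lets the real weighted sums be computed in `ℝ≥0∞`; the modulation
weight `7/16` splits as `19/48 + 1/24`. -/
lemma tsum_weight_eq {a : ℤ × ℤ → ℝ} (hs : (Function.support a).Finite) (ha : ∀ p, 0 ≤ a p)
    (σ : ℤ × ℤ → ℤ) (s : ℝ) :
    ∑' p, (ENNReal.ofReal (jap (σ p) ^ (19 / 48 : ℝ)) *
        ENNReal.ofReal (jap (σ p) ^ ((1 : ℝ) / 24) * jap p.2 ^ s * a p)) ^ 2 =
      ENNReal.ofReal (∑' p, (jap (σ p) ^ ((7 : ℝ) / 16) * jap p.2 ^ s * a p) ^ 2) := by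
  rw [ENNReal.ofReal_tsum_of_nonneg (fun p => sq_nonneg _)]
  · congr 1; ext p
    have h1 := jap_pos (σ p)
    have h2 := jap_pos p.2
    have h3 := ha p
    rw [← ENNReal.ofReal_mul (by positivity), ← ENNReal.ofReal_pow (by positivity)]
    congr 2
    rw [← mul_assoc, ← mul_assoc, ← rpow_add h1]
    norm_num
  · refine summable_of_hasFiniteSupport (hs.subset fun p hp => ?_)
    contrapose! hp
    simp_all

/-- **Key quadrilinear estimate for `Λ₁`:** summing over all `(q₁,q₂,q₃) ∈ ℤ³` and all
`(k₁,k₂,k₃) ∈ ℤ³` with `(k₁+k₂)(k₁+k₃) ≠ 0`,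
`Σ d(q₁+q₂+q₃, k₁+k₂+k₃) a₁(q₁,k₁) a₂(q₂,k₂) a₃(q₃,k₃)
  ≤ C ‖⟨q+k²⟩^{7/16}⟨k⟩ d‖_{ℓ²} ‖⟨q−k²⟩^{7/16}⟨k⟩^{−1/48} a₁‖_{ℓ²}
      ‖⟨q+k²⟩^{7/16}⟨k⟩^{−1/48} a₂‖_{ℓ²} ‖⟨q+k²⟩^{7/16}⟨k⟩^{−1/48} a₃‖_{ℓ²}`. -/
theorem key_estimate_Lambda1 :
    ∃ C > (0:ℝ), ∀ a₁ a₂ a₃ d : ℤ × ℤ → ℝ,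
      (∀ p, 0 ≤ a₁ p) → (∀ p, 0 ≤ a₂ p) → (∀ p, 0 ≤ a₃ p) → (∀ p, 0 ≤ d p) →
      (Function.support a₁).Finite → (Function.support a₂).Finite →
      (Function.support a₃).Finite → (Function.support d).Finite →
      (∑' m : (ℤ × ℤ) × (ℤ × ℤ) × (ℤ × ℤ),
          if (m.1.2 + m.2.1.2) * (m.1.2 + m.2.2.2) ≠ 0 then
            d (m.1.1 + m.2.1.1 + m.2.2.1, m.1.2 + m.2.1.2 + m.2.2.2) *
              a₁ (m.1.1, m.1.2) * a₂ (m.2.1.1, m.2.1.2) * a₃ (m.2.2.1, m.2.2.2)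
          else 0)
        ≤ C * wplus (7/16) 1 d * wminus (7/16) (-(1/48)) a₁ *
            wplus (7/16) (-(1/48)) a₂ * wplus (7/16) (-(1/48)) a₃ := by
  obtain ⟨K, hK, hKQ⟩ := tsum_kernel_le
  refine ⟨1024 * (K.toReal + 1), by positivity, fun a₁ a₂ a₃ d ha₁ ha₂ ha₃ hd s₁ s₂ s₃ sd => ?_⟩
  set f : (ℤ × ℤ) × (ℤ × ℤ) × (ℤ × ℤ) → ℝ := fun m =>
    if (m.1.2 + m.2.1.2) * (m.1.2 + m.2.2.2) ≠ 0 then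
      d (m.1.1 + m.2.1.1 + m.2.2.1, m.1.2 + m.2.1.2 + m.2.2.2) *
        a₁ (m.1.1, m.1.2) * a₂ (m.2.1.1, m.2.1.2) * a₃ (m.2.2.1, m.2.2.2)
    else 0 with hf
  have hf0 : ∀ m, 0 ≤ f m := fun m => by
    simp only [hf]
    split_ifs
    · have := ha₁ (m.1.1, m.1.2)
      have := ha₂ (m.2.1.1, m.2.1.2)
      have := ha₃ (m.2.2.1, m.2.2.2)
      have := hd (m.1.1 + m.2.1.1 + m.2.2.1, m.1.2 + m.2.1.2 + m.2.2.2)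
      positivity
    · exact le_rfl
  set Ed := ∑' p : ℤ × ℤ, (jap (p.1 + p.2 ^ 2) ^ ((7 : ℝ) / 16) * jap p.2 ^ (1 : ℝ) * d p) ^ 2
    with hEd
  set E₁ := ∑' p : ℤ × ℤ,
    (jap (p.1 - p.2 ^ 2) ^ ((7 : ℝ) / 16) * jap p.2 ^ (-((1 : ℝ) / 48)) * a₁ p) ^ 2 with hE₁
  set E₂ := ∑' p : ℤ × ℤ,
    (jap (p.1 + p.2 ^ 2) ^ ((7 : ℝ) / 16) * jap p.2 ^ (-((1 : ℝ) / 48)) * a₂ p) ^ 2 with hE₂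
  set E₃ := ∑' p : ℤ × ℤ,
    (jap (p.1 + p.2 ^ 2) ^ ((7 : ℝ) / 16) * jap p.2 ^ (-((1 : ℝ) / 48)) * a₃ p) ^ 2 with hE₃
  have nd : 0 ≤ Ed := tsum_nonneg fun p => sq_nonneg _
  have n₁ : 0 ≤ E₁ := tsum_nonneg fun p => sq_nonneg _
  have n₂ : 0 ≤ E₂ := tsum_nonneg fun p => sq_nonneg _
  have n₃ : 0 ≤ E₃ := tsum_nonneg fun p => sq_nonneg _
  change ∑' m, f m ≤ 1024 * (K.toReal + 1) * Ed ^ ((1 : ℝ) / 2) * E₁ ^ ((1 : ℝ) / 2) *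
    E₂ ^ ((1 : ℝ) / 2) * E₃ ^ ((1 : ℝ) / 2)
  have hsq : ∀ x : ℝ, 0 ≤ x → (x ^ ((1 : ℝ) / 2)) ^ 2 = x := fun x hx => by
    rw [← Real.sqrt_eq_rpow, Real.sq_sqrt hx]
  refine le_of_sq_le_sq ?_ (by positivity)
  rw [mul_pow, mul_pow, mul_pow, mul_pow, hsq _ nd, hsq _ n₁, hsq _ n₂, hsq _ n₃]
  by_cases hsum : Summable f
  swap
  -- If the sum diverged, its junk value `0` would satisfy the bound.
  · rw [tsum_eq_zero_of_not_summable hsum, zero_pow two_ne_zero]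
    positivity
  set s : ℤ × ℤ → ℝ≥0∞ := fun p => ENNReal.ofReal (jap (p.1 + p.2 ^ 2) ^ (-(19 / 48 : ℝ))) with hs
  set v : ℤ × ℤ → ℝ≥0∞ := fun p => ENNReal.ofReal (jap (p.1 + p.2 ^ 2) ^ (19 / 48 : ℝ)) with hv
  have hsv : ∀ p, s p * v p = 1 := fun p => by
    have h := jap_pos (p.1 + p.2 ^ 2)
    simp only [hs, hv]
    rw [← ENNReal.ofReal_mul (by positivity), ← rpow_add h]
    simp
  set D : ℤ × ℤ → ℝ≥0∞ := fun p =>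
    ENNReal.ofReal (jap (p.1 + p.2 ^ 2) ^ ((1 : ℝ) / 24) * jap p.2 ^ (1 : ℝ) * d p) with hD
  set A₁ : ℤ × ℤ → ℝ≥0∞ := fun p =>
    ENNReal.ofReal (jap (p.1 - p.2 ^ 2) ^ ((1 : ℝ) / 24) * jap p.2 ^ (-((1 : ℝ) / 48)) * a₁ p)
    with hA₁
  set A₂ : ℤ × ℤ → ℝ≥0∞ := fun p =>
    ENNReal.ofReal (jap (p.1 + p.2 ^ 2) ^ ((1 : ℝ) / 24) * jap p.2 ^ (-((1 : ℝ) / 48)) * a₂ p)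
    with hA₂
  set A₃ : ℤ × ℤ → ℝ≥0∞ := fun p =>
    ENNReal.ofReal (jap (p.1 + p.2 ^ 2) ^ ((1 : ℝ) / 24) * jap p.2 ^ (-((1 : ℝ) / 48)) * a₃ p)
    with hA₃
  have hquad := tsum_quad_sq_le hsv hKQ D A₁ A₂ A₃
  have td : ∑' p, (v p * D p) ^ 2 = ENNReal.ofReal Ed :=
    tsum_weight_eq sd hd (fun p => p.1 + p.2 ^ 2) 1
  have t₁ : ∑' p, (v (-p) * A₁ p) ^ 2 = ENNReal.ofReal E₁ := by
    rw [hE₁, ← tsum_weight_eq s₁ ha₁ (fun p => p.1 - p.2 ^ 2)]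
    congr 1; ext p
    -- Reflecting the conjugated factor turns `⟨q - k²⟩` into `⟨q + k²⟩`.
    have : (-p).1 + (-p).2 ^ 2 = -(p.1 - p.2 ^ 2) := by
      simp only [Prod.fst_neg, Prod.snd_neg]; ring
    simp only [hv, hA₁]
    rw [this, jap_neg]
  have t₂ : ∑' p, (v p * A₂ p) ^ 2 = ENNReal.ofReal E₂ :=
    tsum_weight_eq s₂ ha₂ (fun p => p.1 + p.2 ^ 2) _
  have t₃ : ∑' p, (v p * A₃ p) ^ 2 = ENNReal.ofReal E₃ :=
    tsum_weight_eq s₃ ha₃ (fun p => p.1 + p.2 ^ 2) _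
  rw [td, t₁, t₂, t₃] at hquad
  have hle : ENNReal.ofReal (∑' m, f m) ≤ ENNReal.ofReal 1024 *
      ∑' m : (ℤ × ℤ) × (ℤ × ℤ) × (ℤ × ℤ),
        D (m.1 + m.2.1 + m.2.2) * A₁ m.1 * A₂ m.2.1 * A₃ m.2.2 := by
    rw [ENNReal.ofReal_tsum_of_nonneg hf0 hsum, ← ENNReal.tsum_mul_left]
    refine ENNReal.tsum_le_tsum fun ⟨⟨q₁, k₁⟩, ⟨q₂, k₂⟩, ⟨q₃, k₃⟩⟩ => ?_
    by_cases h : (k₁ + k₂) * (k₁ + k₃) = 0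
    · rw [show f ((q₁, k₁), (q₂, k₂), (q₃, k₃)) = 0 from if_neg (not_not.2 h)]
      simp
    · have ht := term_le (q₁ := q₁) (q₂ := q₂) (q₃ := q₃) h
        (hd (q₁ + q₂ + q₃, k₁ + k₂ + k₃)) (ha₁ (q₁, k₁)) (ha₂ (q₂, k₂)) (ha₃ (q₃, k₃))
      have p0 := jap_pos (q₁ + q₂ + q₃ + (k₁ + k₂ + k₃) ^ 2)
      have p1 := jap_pos (q₁ - k₁ ^ 2)
      have p2 := jap_pos (q₂ + k₂ ^ 2)
      have p3 := jap_pos (k₁ + k₂ + k₃)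
      have p4 := jap_pos k₁
      have p5 := jap_pos k₂
      have h0 := hd (q₁ + q₂ + q₃, k₁ + k₂ + k₃)
      have h1 := ha₁ (q₁, k₁)
      have h2 := ha₂ (q₂, k₂)
      simp only [hf, hD, hA₁, hA₂, hA₃, Prod.mk_add_mk, ne_eq, h, not_false_eq_true, if_true]
      rw [← ENNReal.ofReal_mul (by positivity), ← ENNReal.ofReal_mul (by positivity),
        ← ENNReal.ofReal_mul (by positivity), ← ENNReal.ofReal_mul (by positivity)]
      exact ENNReal.ofReal_le_ofReal ht
  have hfin : ENNReal.ofReal ((∑' m, f m) ^ 2) ≤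
      ENNReal.ofReal ((1024 * K.toReal) ^ 2 * (Ed * E₁ * E₂ * E₃)) := by
    rw [ENNReal.ofReal_pow (tsum_nonneg hf0)]
    refine (pow_le_pow_left₀ zero_le hle 2).trans ?_
    rw [mul_pow]
    refine (mul_le_mul_right hquad _).trans_eq ?_
    nth_rewrite 1 [← ENNReal.ofReal_toReal hK.ne]
    rw [← ENNReal.ofReal_mul nd, ← ENNReal.ofReal_mul (by positivity),
      ← ENNReal.ofReal_mul (by positivity), ← mul_assoc, ← mul_pow,
      ← ENNReal.ofReal_mul (by norm_num), ← ENNReal.ofReal_pow (by positivity),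
      ← ENNReal.ofReal_mul (by positivity)]
  refine ((ENNReal.ofReal_le_ofReal_iff (by positivity)).1 hfin).trans ?_
  rw [← mul_assoc, ← mul_assoc, ← mul_assoc]
  gcongr
  linarith
end
end

section
/- Let k₁, k₂, k₃ ∈ ℤ satisfy (k₁+k₂)(k₁+k₃) ≠ 0 and 4|k₁+k₂+k₃| < max(|k₁|,|k₂|,|k₃|). Then for all q₁, q₂, q₃ ∈ ℤ, setting q := q₁+q₂+q₃ and k := k₁+k₂+k₃, one has 8·max( |q+k²|, |q₁−k₁²|, |q₂+k₂²|, |q₃+k₃²| ) ≥ max(|k₁|,|k₂|,|k₃|). -/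
/-!
With `a = k₁ + k₂`, `b = k₁ + k₃`, `k = k₁ + k₂ + k₃`, the resonance identity writes `2ab` as a
signed sum of the four modulations, so `2|ab| ≤ 4M`, where `M` is the largest modulation.
Each frequency is a combination of `a`, `b`, `k` (`k₁ = a + b - k`, `k₂ = k - b`, `k₃ = k - a`),
hence the largest frequency `K` satisfies `K ≤ |a| + |b| + |k|`. As `4|k| < K`, this gives
`3K < 4(|a| + |b|)`. Since `a` and `b` are nonzero integers, `|a| + |b| ≤ 2|ab|`, and therefore
`K ≤ 4|ab| ≤ 8M`.
-/


/-- **The largest modulation dominates the largest frequency in the non-resonant region:**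
if `(k₁+k₂)(k₁+k₃) ≠ 0` and `4|k₁+k₂+k₃| < max(|k₁|,|k₂|,|k₃|)`, then with `q = q₁+q₂+q₃`
and `k = k₁+k₂+k₃`, `8·max(|q+k²|,|q₁−k₁²|,|q₂+k₂²|,|q₃+k₃²|) ≥ max(|k₁|,|k₂|,|k₃|)`. -/
theorem modulation_dominates_frequency (k₁ k₂ k₃ : ℤ)
    (hres : (k₁ + k₂) * (k₁ + k₃) ≠ 0)
    (hsmall : 4 * |k₁ + k₂ + k₃| < max (max |k₁| |k₂|) |k₃|) :
    ∀ q₁ q₂ q₃ : ℤ,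
      8 * max (max (|q₁ + q₂ + q₃ + (k₁ + k₂ + k₃) ^ 2|) (|q₁ - k₁ ^ 2|))
            (max (|q₂ + k₂ ^ 2|) (|q₃ + k₃ ^ 2|))
        ≥ max (max |k₁| |k₂|) |k₃| := by
  intro q₁ q₂ q₃
  obtain ⟨ha, hb⟩ := mul_ne_zero_iff.mp hres
  have ha1 : 1 ≤ |k₁ + k₂| := Int.one_le_abs ha
  have hb1 : 1 ≤ |k₁ + k₃| := Int.one_le_abs hb
  have hab : |k₁ + k₂| + |k₁ + k₃| ≤ 2 * |(k₁ + k₂) * (k₁ + k₃)| := by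
    rw [abs_mul]
    nlinarith
  have hK : max (max |k₁| |k₂|) |k₃| ≤ |k₁ + k₂| + |k₁ + k₃| + |k₁ + k₂ + k₃| := by
    refine max_le (max_le ?_ ?_) ?_ <;> grind
  set M := max (max (|q₁ + q₂ + q₃ + (k₁ + k₂ + k₃) ^ 2|) (|q₁ - k₁ ^ 2|))
    (max (|q₂ + k₂ ^ 2|) (|q₃ + k₃ ^ 2|)) with hM
  have h0 : |q₁ + q₂ + q₃ + (k₁ + k₂ + k₃) ^ 2| ≤ M := by simp [hM]
  have h1 : |q₁ - k₁ ^ 2| ≤ M := by simp [hM]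
  have h2 : |q₂ + k₂ ^ 2| ≤ M := by simp [hM]
  have h3 : |q₃ + k₃ ^ 2| ≤ M := by simp [hM]
  rw [abs_le] at h0 h1 h2 h3
  have hmod : |(k₁ + k₂) * (k₁ + k₃)| ≤ 2 * M := by
    -- the resonance identity
    have hid : q₁ + q₂ + q₃ + (k₁ + k₂ + k₃) ^ 2 - (q₁ - k₁ ^ 2) - (q₂ + k₂ ^ 2) - (q₃ + k₃ ^ 2)
        = 2 * ((k₁ + k₂) * (k₁ + k₃)) := by ring
    rw [abs_le]
    constructor <;> linarith [h0.1, h0.2, h1.1, h1.2, h2.1, h2.2, h3.1, h3.2]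
  have hk := abs_nonneg (k₁ + k₂ + k₃)
  linarith
end
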